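/- Roots of monomials after power substitution are mild: Let U ⊂ (0,1)^m be open and let b : U → ℝ be given by b(x) = a·x^μ with a > 0 and μ ∈ ℝ^m, and suppose b is C^1-bounded, i.e. b and all of its first-order partial derivatives are bounded on U. Then there exist A,B > 0, depending only on b (i.e. on a, μ and the bounds on b and its first-order derivatives), such that for every integer r > 0, every integer l ≥ 1 and all integers n_1,…,n_m with n_i ≥ r^l, setting φ(x_1,…,x_m) = (x_1^{n_1},…,x_m^{n_m}) and V = φ^{-1}(U), the function (b ∘ φ)^{1/r^{l-1}} : V → ℝ is (max(n_1,…,n_m)·A, B, 0)-mild up to order r. -/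

import Mathlib

/-!
Write `R = r ^ (l - 1)` and `N = max n`. On `φ⁻¹(U)` the function is again a monomial,
`f(x) = a ^ (1/R) * ∏ x i ^ λ i` with `λ i = n i * μ i / R` (`root_powMap`), so `f^{(ν)}(x)` is
`f(x) / x ^ ν` times a product of falling factorials of the `λ i` (`iteratedFDerivWithin_monom`).
As `|ν| ≤ r ≤ N` and `|λ i| ≤ N * ∑ |μ j|`, that product is at most `(N * (1 + ∑ |μ j|)) ^ |ν|`
(`abs_dCoeff_le`), and it vanishes if some differentiated coordinate has `μ i = 0`
(`dCoeff_eq_zero`).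

It remains to bound `f(x) / x ^ ν`. The bound on `∂b/∂y i = μ i * b / y i` gives `b(y) ≤ K * y i`
whenever `μ i ≠ 0`. Substituting `y i = x i ^ n i` with `n i ≥ r ^ l = r * R` and taking `R`-th
roots gives `f(x) ≤ K * x i ^ r` (`root_le`). Applied to the smallest differentiated coordinate
`x i₀`, this yields `f(x) ≤ K * x i₀ ^ r ≤ K * x ^ ν` (`abs_pderivW_le`). Hence
`A = 1 + ∑ |μ j|` and `B = K` work, and the factorial is not even needed.
-/

open Set

noncomputable section

/-- The list of coordinate directions (with multiplicities) associated to a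
multi-index `ν ∈ ℕ^d`. -/
def mDirs {d : ℕ} (ν : Fin d → ℕ) : List (Fin d → ℝ) :=
  (List.finRange d).flatMap fun i => List.replicate (ν i) (Pi.single i 1)

/-- The partial derivative `f^{(ν)}` of `f : ℝ^d → ℝ` (computed within the set `U`) at `x`,
realized as the iterated derivative of order `|ν|` in the coordinate directions given by `ν`. -/
def pderivW {d : ℕ} (U : Set (Fin d → ℝ)) (f : (Fin d → ℝ) → ℝ) (ν : Fin d → ℕ)
    (x : Fin d → ℝ) : ℝ :=
  iteratedFDerivWithin ℝ (∑ i, ν i) f U x (fun j => (mDirs ν).getD (j : ℕ) 0)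

/-- `f` is `(A,B,C)`-mild up to order `r` on `U`. -/
def MildUpTo {d : ℕ} (r : ℕ∞) (U : Set (Fin d → ℝ)) (f : (Fin d → ℝ) → ℝ)
    (A B C : ℝ) : Prop :=
  ContDiffOn ℝ r f U ∧ ∀ ν : Fin d → ℕ, (∑ i, ν i : ℕ∞) ≤ r → ∀ x ∈ U,
    |pderivW U f ν x| ≤ B ^ (C + 1) * A ^ (∑ i, ν i) * (Nat.factorial (∑ i, ν i) : ℝ) ^ (C + 1)

/-- `f` is `(A,B,C)`-mild on `U`. -/
def Mild {d : ℕ} (U : Set (Fin d → ℝ)) (f : (Fin d → ℝ) → ℝ) (A B C : ℝ) : Prop :=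
  MildUpTo ⊤ U f A B C

/-- `f` is weakly `(A,B,C)`-mild up to order `r` on `U ⊆ (0,1)^d`. -/
def WeaklyMildUpTo {d : ℕ} (r : ℕ∞) (U : Set (Fin d → ℝ)) (f : (Fin d → ℝ) → ℝ)
    (A B C : ℝ) : Prop :=
  ContDiffOn ℝ r f U ∧ ∀ ν : Fin d → ℕ, (∑ i, ν i : ℕ∞) ≤ r → ∀ x ∈ U,
    |pderivW U f ν x| ≤
      B ^ (C + 1) * A ^ (∑ i, ν i) * (Nat.factorial (∑ i, ν i) : ℝ) ^ (C + 1) /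
        ∏ i, (x i) ^ (ν i)

/-- `f` is weakly `(A,B,C)`-mild on `U`. -/
def WeaklyMild {d : ℕ} (U : Set (Fin d → ℝ)) (f : (Fin d → ℝ) → ℝ) (A B C : ℝ) : Prop :=
  WeaklyMildUpTo ⊤ U f A B C

/-- `f` is a Gevrey function of class `α` on `U`. -/
def Gevrey {d : ℕ} (U : Set (Fin d → ℝ)) (f : (Fin d → ℝ) → ℝ) (α : ℝ) : Prop :=
  ContDiffOn ℝ (⊤ : ℕ∞) f U ∧ ∃ M R : ℝ, 0 < M ∧ 0 < R ∧ ∀ ν : Fin d → ℕ, ∀ x ∈ U,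
    |pderivW U f ν x| ≤ (M * (Nat.factorial (∑ i, ν i) : ℝ) / R ^ (∑ i, ν i)) ^ α

/-- The power substitution map `φ(x) = (x_1^{n_1},…,x_m^{n_m})`. -/
def powMap {m : ℕ} (n : Fin m → ℕ) : (Fin m → ℝ) → (Fin m → ℝ) := fun x i => x i ^ n i

/-! ### Iterated derivatives of a monomial -/

/-- The monomial `y ↦ ∏ i, y i ^ κ i` with real exponents. -/
def monom {m : ℕ} (κ : Fin m → ℝ) (y : Fin m → ℝ) : ℝ := ∏ i, y i ^ κ i

/-- The exponent left after differentiating `y ^ lam` once in each direction of the list. -/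
def dExp {m : ℕ} (lam : Fin m → ℝ) : List (Fin m) → Fin m → ℝ
  | [] => lam
  | i :: L => dExp lam L - Pi.single i 1

/-- The coefficient produced by differentiating `y ^ lam` once in each direction of the list:
a product of falling factorials of the exponents. -/
def dCoeff {m : ℕ} (lam : Fin m → ℝ) : List (Fin m) → ℝ
  | [] => 1
  | i :: L => dCoeff lam L * dExp lam L i

/-- The list of indices underlying `mDirs ν`. -/
def mIdx {d : ℕ} (ν : Fin d → ℕ) : List (Fin d) :=
  (List.finRange d).flatMap fun i => List.replicate (ν i) i

lemma mDirs_eq_map {d : ℕ} (ν : Fin d → ℕ) :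
    mDirs ν = (mIdx ν).map fun i => Pi.single i (1 : ℝ) := by
  simp [mDirs, mIdx, List.map_flatMap]

lemma length_mIdx {d : ℕ} (ν : Fin d → ℕ) : (mIdx ν).length = ∑ i, ν i := by
  simp [mIdx, List.length_flatMap, Fin.sum_univ_def]

lemma mIdx_single {d : ℕ} (i : Fin d) : mIdx (Pi.single i 1) = [i] := by
  have h : mIdx (Pi.single i 1) = List.replicate 1 i := by
    rw [List.eq_replicate_iff]
    constructor
    · rw [length_mIdx]; simp
    · intro b hb
      by_contra hne
      simp [mIdx, List.mem_flatMap, hne] at hb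
  simpa using h

lemma monom_pos {m : ℕ} (κ : Fin m → ℝ) {y : Fin m → ℝ} (hy : ∀ i, 0 < y i) :
    0 < monom κ y := Finset.prod_pos fun i _ => Real.rpow_pos_of_pos (hy i) _

lemma monom_sub_single {m : ℕ} (κ : Fin m → ℝ) (i : Fin m) {y : Fin m → ℝ}
    (hy : ∀ i, 0 < y i) : monom (κ - Pi.single i 1) y = monom κ y / y i := by
  have : ∀ j, y j ^ (κ - Pi.single i 1 : Fin m → ℝ) j = y j ^ κ j / (if j = i then y j else 1) := by
    intro j
    rw [Pi.sub_apply, Real.rpow_sub (hy j)]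
    by_cases h : j = i
    · subst h; simp
    · simp [h]
  simp only [monom, this, Finset.prod_div_distrib]
  simp

lemma hasFDerivAt_monom {m : ℕ} (κ : Fin m → ℝ) {y : Fin m → ℝ} (hy : ∀ i, 0 < y i) :
    ∃ D : (Fin m → ℝ) →L[ℝ] ℝ, HasFDerivAt (monom κ) D y ∧
      ∀ i, D (Pi.single i 1) = κ i * monom (κ - Pi.single i 1) y := by
  have h1 : ∀ i ∈ Finset.univ, HasFDerivAt (fun z : Fin m → ℝ => z i ^ κ i)
      ((κ i * y i ^ (κ i - 1)) • ContinuousLinearMap.proj (R := ℝ) (φ := fun _ : Fin m => ℝ) i)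
      y := by
    intro i _
    exact (hasFDerivAt_apply (𝕜 := ℝ) i y).rpow_const (Or.inl (hy i).ne')
  refine ⟨_, HasFDerivAt.finsetProd h1, fun i => ?_⟩
  have hi := (hy i).ne'
  rw [monom_sub_single κ i hy]
  simp only [sum_apply, smul_apply,
    ContinuousLinearMap.proj_apply, smul_eq_mul]
  rw [Finset.sum_eq_single i]
  · rw [monom, ← Finset.prod_erase_mul _ _ (Finset.mem_univ i), Real.rpow_sub_one hi]
    simp; ring
  · intro j _ hj
    simp [hj]
  · simp

lemma contDiffOn_monom {m : ℕ} (κ : Fin m → ℝ) {V : Set (Fin m → ℝ)}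
    (hV : ∀ y ∈ V, ∀ i, 0 < y i) {n : WithTop ℕ∞} : ContDiffOn ℝ n (monom κ) V := by
  unfold monom
  refine contDiffOn_prod fun i _ => ?_
  exact (contDiff_apply ℝ ℝ i).contDiffOn.rpow_const_of_ne fun y hy => (hV y hy i).ne'

/-- Closed form of every iterated coordinate derivative of a monomial. The list is consumed from
its head because the head direction is the outermost derivative. -/
lemma iteratedFDerivWithin_monom {m : ℕ} {V : Set (Fin m → ℝ)} (hVo : IsOpen V)
    (hV : ∀ y ∈ V, ∀ i, 0 < y i) (c : ℝ) (lam : Fin m → ℝ) (L : List (Fin m)) :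
    ∀ k, L.length = k → ∀ y ∈ V,
      iteratedFDerivWithin ℝ k (fun z => c * monom lam z) V y
        (fun j : Fin k => (L.map fun i => (Pi.single i (1 : ℝ) : Fin m → ℝ)).getD (j : ℕ) 0)
      = dCoeff lam L * (c * monom (dExp lam L) y) := by
  induction L with
  | nil =>
    rintro k rfl y hy
    simp [dCoeff, dExp]
  | cons i L ih =>
    rintro k rfl y hy
    have hsm : ContDiffOn ℝ (⊤ : ℕ∞) (fun z => c * monom lam z) V :=
      contDiffOn_const.mul (contDiffOn_monom lam hV)
    have hdiff : DifferentiableWithinAt ℝ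
        (iteratedFDerivWithin ℝ L.length (fun z => c * monom lam z) V) V y :=
      hsm.differentiableOn_iteratedFDerivWithin
        (by exact_mod_cast WithTop.coe_lt_top _) hVo.uniqueDiffOn y hy
    rw [List.length_cons, iteratedFDerivWithin_succ_apply_left,
      ← fderivWithin_continuousMultilinear_apply_const_apply (hVo.uniqueDiffOn y hy) hdiff]
    have hcongr : ∀ z ∈ V, iteratedFDerivWithin ℝ L.length (fun z => c * monom lam z) V z
        (Fin.tail fun j : Fin (L.length + 1) =>
          ((i :: L).map fun i => (Pi.single i (1 : ℝ) : Fin m → ℝ)).getD (j : ℕ) 0)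
        = dCoeff lam L * (c * monom (dExp lam L) z) := by
      intro z hz
      rw [← ih _ rfl z hz]
      rfl
    rw [fderivWithin_congr hcongr (hcongr y hy), fderivWithin_of_isOpen hVo hy]
    obtain ⟨D, hD, hDi⟩ := hasFDerivAt_monom (dExp lam L) (hV y hy)
    rw [((hD.const_mul c).const_mul (dCoeff lam L)).fderiv]
    simp [hDi, dCoeff, dExp]
    ring

lemma pderivW_monom {m : ℕ} {V : Set (Fin m → ℝ)} (hVo : IsOpen V)
    (hV : ∀ y ∈ V, ∀ i, 0 < y i) (c : ℝ) (lam : Fin m → ℝ) (ν : Fin m → ℕ)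
    {y : Fin m → ℝ} (hy : y ∈ V) :
    pderivW V (fun z => c * monom lam z) ν y
      = dCoeff lam (mIdx ν) * (c * monom (dExp lam (mIdx ν)) y) := by
  rw [pderivW, mDirs_eq_map]
  exact iteratedFDerivWithin_monom hVo hV c lam _ _ (length_mIdx ν) y hy

/-! ### Bounds on coefficients and exponents -/

lemma abs_dExp_le {m : ℕ} (lam : Fin m → ℝ) (L : List (Fin m)) (i : Fin m) :
    |dExp lam L i| ≤ |lam i| + L.length := by
  induction L with
  | nil => simp [dExp]
  | cons j L ih =>
    have h1 : |(Pi.single j 1 : Fin m → ℝ) i| ≤ 1 := by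
      rw [Pi.single_apply]; split_ifs <;> simp
    have := abs_sub (dExp lam L i) ((Pi.single j 1 : Fin m → ℝ) i)
    simp only [dExp, Pi.sub_apply, List.length_cons, Nat.cast_add, Nat.cast_one]
    linarith

lemma dExp_of_notMem {m : ℕ} (lam : Fin m → ℝ) (L : List (Fin m)) (i : Fin m) (h : i ∉ L) :
    dExp lam L i = lam i := by
  induction L with
  | nil => rfl
  | cons j L ih =>
    simp only [List.mem_cons, not_or] at h
    simp [dExp, ih h.2, h.1]

/-- Differentiating in a direction on which the monomial does not depend gives zero. -/
lemma dCoeff_eq_zero {m : ℕ} (lam : Fin m → ℝ) (L : List (Fin m)) (i : Fin m) (h : i ∈ L)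
    (h0 : lam i = 0) : dCoeff lam L = 0 := by
  induction L with
  | nil => simp at h
  | cons j L ih =>
    by_cases hL : i ∈ L
    · simp [dCoeff, ih hL]
    · have hij : i = j := by simpa [hL] using h
      subst hij
      simp [dCoeff, dExp_of_notMem lam L i hL, h0]

lemma abs_dCoeff_le {m : ℕ} (lam : Fin m → ℝ) {P : ℝ} (L : List (Fin m))
    (h : ∀ i, |lam i| + L.length ≤ P) : |dCoeff lam L| ≤ P ^ L.length := by
  induction L with
  | nil => simp [dCoeff]
  | cons j L ih =>
    have h' : ∀ i, |lam i| + L.length ≤ P := fun i => by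
      have := h i
      push_cast [List.length_cons] at this
      linarith
    rw [dCoeff, abs_mul, List.length_cons, pow_succ]
    have hP : 0 ≤ P := le_trans (by positivity) (h' j)
    exact mul_le_mul (ih h') ((abs_dExp_le lam L j).trans (h' j)) (abs_nonneg _) (by positivity)

/-- Up to the coefficient, each differentiation divides the monomial by the differentiated
coordinate, so it enlarges it by a factor of at most `1 / δ`. -/
lemma monom_dExp_mul_le {m : ℕ} (lam : Fin m → ℝ) {y : Fin m → ℝ} (hy : ∀ i, 0 < y i)
    {δ : ℝ} (hδ : 0 ≤ δ) (L : List (Fin m)) (h : ∀ i ∈ L, δ ≤ y i) :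
    monom (dExp lam L) y * δ ^ L.length ≤ monom lam y := by
  induction L with
  | nil => simp [dExp]
  | cons j L ih =>
    have hp := monom_pos (dExp lam L) hy
    refine le_trans ?_ (ih fun i hi => h i (List.mem_cons_of_mem _ hi))
    rw [dExp, monom_sub_single _ _ hy, List.length_cons, pow_succ']
    have h1 : δ / y j ≤ 1 := (div_le_one (hy j)).2 (h j List.mem_cons_self)
    calc monom (dExp lam L) y / y j * (δ * δ ^ L.length)
        = (monom (dExp lam L) y * δ ^ L.length) * (δ / y j) := by ring
      _ ≤ _ := mul_le_of_le_one_right (by positivity) h1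

/-! ### Roots after a power substitution -/

lemma root_powMap {m : ℕ} {a : ℝ} (ha : 0 < a) (μ : Fin m → ℝ) (n : Fin m → ℕ) (s : ℝ)
    {x : Fin m → ℝ} (hx : ∀ i, 0 < x i) :
    (a * ∏ i, (powMap n x) i ^ μ i) ^ s = a ^ s * monom (fun i => n i * μ i * s) x := by
  have h0 : ∀ i, 0 ≤ (powMap n x) i ^ μ i := fun i =>
    Real.rpow_nonneg (pow_nonneg (hx i).le _) _
  rw [Real.mul_rpow ha.le (Finset.prod_nonneg fun i _ => h0 i),
    ← Real.finsetProd_rpow _ _ fun i _ => h0 i]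
  congr 1
  refine Finset.prod_congr rfl fun i _ => ?_
  rw [powMap, ← Real.rpow_natCast, ← Real.rpow_mul (hx i).le, ← Real.rpow_mul (hx i).le]

/-- The exponent bookkeeping behind the theorem: `n ≥ r ^ l` turns a linear bound on `b` in `y i`
into an `r`-th order bound on its root in `x i`, where `y i = x i ^ n`. -/
lemma root_le {b K t : ℝ} (hb : 0 ≤ b) (hK : 1 ≤ K) (ht0 : 0 ≤ t) (ht1 : t ≤ 1) {r l n : ℕ}
    (hr : 0 < r) (hl : 1 ≤ l) (hn : r ^ l ≤ n) (h : b ≤ K * t ^ n) :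
    b ^ ((1 : ℝ) / (r : ℝ) ^ (l - 1)) ≤ K * t ^ r := by
  have hR : r ^ (l - 1) ≠ 0 := by positivity
  have hs0 : 0 ≤ (1 : ℝ) / (r : ℝ) ^ (l - 1) := by positivity
  have hs1 : (1 : ℝ) / (r : ℝ) ^ (l - 1) ≤ 1 := by
    rw [div_le_one (by positivity)]
    exact one_le_pow₀ (by exact_mod_cast hr)
  have hle : b ≤ K * (t ^ r) ^ (r ^ (l - 1)) := by
    rw [← pow_mul, ← pow_succ', Nat.sub_add_cancel hl]
    exact h.trans (mul_le_mul_of_nonneg_left (pow_le_pow_of_le_one ht0 ht1 hn) (by linarith))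
  refine (Real.rpow_le_rpow hb hle hs0).trans ?_
  rw [Real.mul_rpow (by linarith) (by positivity)]
  refine mul_le_mul ?_ (le_of_eq ?_) (by positivity) (by linarith)
  · simpa using Real.rpow_le_rpow_of_exponent_le hK hs1
  · have := Real.pow_rpow_inv_natCast (pow_nonneg ht0 r) hR
    rwa [Nat.cast_pow, ← one_div] at this

/-- The derivative bound for a monomial `c * y ^ lam` on the unit cube that vanishes to order `r`
in every coordinate on which it depends. -/
lemma abs_pderivW_le {m : ℕ} {V : Set (Fin m → ℝ)} (hVo : IsOpen V)
    (hV : ∀ y ∈ V, ∀ i, y i ∈ Ioo (0 : ℝ) 1) {c K P : ℝ} (hc : 0 < c) (hK : 0 ≤ K)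
    (lam : Fin m → ℝ) (ν : Fin m → ℕ) {r : ℕ} (hν : ∑ i, ν i ≤ r)
    (hP : ∀ i, |lam i| + r ≤ P) {y : Fin m → ℝ} (hy : y ∈ V)
    (h0 : c * monom lam y ≤ K)
    (h1 : ∀ i, lam i ≠ 0 → c * monom lam y ≤ K * y i ^ r) :
    |pderivW V (fun z => c * monom lam z) ν y| ≤ K * P ^ (∑ i, ν i) := by
  have hpos : ∀ z ∈ V, ∀ i, 0 < z i := fun z hz i => (hV z hz i).1
  rw [pderivW_monom hVo hpos c lam ν hy, ← length_mIdx]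
  rw [← length_mIdx] at hν
  generalize mIdx ν = L at *
  have hmp := monom_pos (dExp lam L) (hpos y hy)
  rw [abs_mul, abs_of_pos (mul_pos hc hmp), mul_comm]
  have hC : |dCoeff lam L| ≤ P ^ L.length := abs_dCoeff_le lam L fun i => by
    have : (L.length : ℝ) ≤ r := by exact_mod_cast hν
    linarith [hP i]
  by_cases hz : ∃ i ∈ L, lam i = 0
  · obtain ⟨i, hi, hi0⟩ := hz
    have hd := dCoeff_eq_zero lam L i hi hi0
    rw [hd, abs_zero, mul_zero]
    rw [hd, abs_zero] at hC
    exact mul_nonneg hK hC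
  push Not at hz
  refine mul_le_mul ?_ hC (abs_nonneg _) hK
  rcases L.eq_nil_or_concat with hL | ⟨L', j, hL⟩
  · subst hL; simpa [dExp] using h0
  -- `y i₀` is the least coordinate among those differentiated
  obtain ⟨i₀, hi₀, hmin⟩ := L.toFinset.exists_min_image y ⟨j, by simp [hL]⟩
  rw [List.mem_toFinset] at hi₀
  have hδ := hV y hy i₀
  have hle := monom_dExp_mul_le lam (hpos y hy) hδ.1.le L
    fun i hi => hmin i (List.mem_toFinset.2 hi)
  have hpw : y i₀ ^ r ≤ y i₀ ^ L.length := pow_le_pow_of_le_one hδ.1.le hδ.2.le hν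
  have hkey : (c * monom (dExp lam L) y) * y i₀ ^ L.length ≤ K * y i₀ ^ L.length := by
    calc _ = c * (monom (dExp lam L) y * y i₀ ^ L.length) := by ring
      _ ≤ c * monom lam y := mul_le_mul_of_nonneg_left hle hc.le
      _ ≤ K * y i₀ ^ r := h1 i₀ (hz i₀ hi₀)
      _ ≤ _ := mul_le_mul_of_nonneg_left hpw hK
  exact le_of_mul_le_mul_right hkey (pow_pos hδ.1 _)

lemma pderivW_congr {d : ℕ} {V : Set (Fin d → ℝ)} {f g : (Fin d → ℝ) → ℝ}
    (h : EqOn f g V) (ν : Fin d → ℕ) {x : Fin d → ℝ} (hx : x ∈ V) :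
    pderivW V f ν x = pderivW V g ν x := by
  rw [pderivW, pderivW, iteratedFDerivWithin_congr h hx]

/-- roots of a `C^1`-bounded monomial after a power substitution are mild:
there are `A,B > 0` depending only on the monomial `b(x) = a·x^μ` (via `a`, `μ` and the
`C^1`-bound `B'`) such that for all integers `r > 0`, `l ≥ 1` and `n_i ≥ r^l`,
`(b ∘ φ)^{1/r^{l-1}}` is `(max(n)·A, B, 0)`-mild up to order `r` on `φ⁻¹(U)`. -/
theorem monomial_root_power_mild {m : ℕ} (U : Set (Fin m → ℝ)) (hU : IsOpen U)
    (hUsub : U ⊆ {x | ∀ i, x i ∈ Ioo (0 : ℝ) 1})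
    (a : ℝ) (ha : 0 < a) (μ : Fin m → ℝ) (B' : ℝ)
    (hbd : ∀ x ∈ U, |a * ∏ i, x i ^ μ i| ≤ B')
    (hbd' : ∀ i : Fin m, ∀ x ∈ U,
      |pderivW U (fun y => a * ∏ i', y i' ^ μ i') (Pi.single i 1) x| ≤ B') :
    ∃ A B : ℝ, 0 < A ∧ 0 < B ∧
      ∀ r : ℕ, 0 < r → ∀ l : ℕ, 1 ≤ l → ∀ n : Fin m → ℕ, (∀ i, r ^ l ≤ n i) →
        MildUpTo r {x | (∀ i, x i ∈ Ioo (0 : ℝ) 1) ∧ powMap n x ∈ U}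
          (fun x => (a * ∏ i, (powMap n x) i ^ μ i) ^ ((1 : ℝ) / (r : ℝ) ^ (l - 1)))
          (((Finset.univ.sup n : ℕ) : ℝ) * A) B 0 := by
  set M : ℝ := ∑ i, |μ i| with hM
  set K : ℝ := 1 + |B'| + ∑ i, |B'| / |μ i| with hKdef
  have hM0 : 0 ≤ M := Finset.sum_nonneg fun i _ => abs_nonneg _
  have hS0 : 0 ≤ ∑ i, |B'| / |μ i| := Finset.sum_nonneg fun i _ => by positivity
  have hK1 : 1 ≤ K := by have := abs_nonneg B'; linarith
  have hMi : ∀ i, |μ i| ≤ M := fun i =>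
    Finset.single_le_sum (f := fun i => |μ i|) (fun i _ => abs_nonneg _) (Finset.mem_univ i)
  have hUpos : ∀ y ∈ U, ∀ i, 0 < y i := fun y hy i => (hUsub hy i).1
  have hb0 : ∀ y ∈ U, a * monom μ y ≤ K := fun y hy => by
    have h1 := (le_abs_self _).trans (hbd y hy)
    have h2 := le_abs_self B'
    change a * monom μ y ≤ B' at h1
    linarith
  have hb1 : ∀ y ∈ U, ∀ i, μ i ≠ 0 → a * monom μ y ≤ K * y i := fun y hy i hi => by
    have h1 := hbd' i y hy
    change |pderivW U (fun z => a * monom μ z) _ y| ≤ B' at h1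
    have hyi := hUpos y hy i
    have hm := monom_pos μ (hUpos y hy)
    rw [pderivW_monom hU hUpos a μ _ hy, mIdx_single] at h1
    simp only [dCoeff, dExp, one_mul] at h1
    rw [monom_sub_single _ _ (hUpos y hy), abs_mul,
      abs_of_pos (mul_pos ha (div_pos hm hyi))] at h1
    have hμ : 0 < |μ i| := abs_pos.2 hi
    have h2 : a * (monom μ y / y i) ≤ |B'| / |μ i| := by
      rw [le_div_iff₀ hμ]
      linarith [le_abs_self B']
    have h3 : |B'| / |μ i| ≤ ∑ i, |B'| / |μ i| :=
      Finset.single_le_sum (f := fun i => |B'| / |μ i|) (fun i _ => by positivity)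
        (Finset.mem_univ i)
    have h4 : a * (monom μ y / y i) ≤ K := by have := abs_nonneg B'; linarith
    rw [← mul_div_assoc, div_le_iff₀ hyi] at h4
    exact h4
  refine ⟨M + 1, K, by linarith, by linarith, fun r hr l hl n hn => ?_⟩
  set V : Set (Fin m → ℝ) := {x | (∀ i, x i ∈ Ioo (0 : ℝ) 1) ∧ powMap n x ∈ U} with hVdef
  set s : ℝ := (1 : ℝ) / (r : ℝ) ^ (l - 1) with hs
  have hs0 : 0 < s := by positivity
  have hs1 : s ≤ 1 := by
    rw [hs, div_le_one (by positivity)]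
    exact one_le_pow₀ (by exact_mod_cast hr)
  have hVo : IsOpen V := by
    have h1 : IsOpen {x : Fin m → ℝ | ∀ i, x i ∈ Ioo (0 : ℝ) 1} := by
      simp only [ofPred_forall]
      exact isOpen_iInter_of_finite fun i => isOpen_Ioo.preimage (continuous_apply i)
    have h2 : Continuous (powMap n) :=
      continuous_pi fun i => (continuous_apply i).pow _
    exact h1.inter (hU.preimage h2)
  have hVpos : ∀ x ∈ V, ∀ i, 0 < x i := fun x hx i => (hx.1 i).1
  set lam : Fin m → ℝ := fun i => n i * μ i * s with hlam
  have heq : EqOn (fun x => (a * ∏ i, (powMap n x) i ^ μ i) ^ s)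
      (fun x => a ^ s * monom lam x) V := fun x hx => root_powMap ha μ n s (hVpos x hx)
  refine ⟨(contDiffOn_const.mul (contDiffOn_monom lam hVpos)).congr heq, fun ν hν x hx => ?_⟩
  have hν' : ∑ i, ν i ≤ r := by exact_mod_cast hν
  rw [pderivW_congr heq ν hx]
  have hbpos : 0 < a * monom μ (powMap n x) := mul_pos ha (monom_pos _ (hUpos _ hx.2))
  have main := abs_pderivW_le (c := a ^ s) (K := K)
    (P := ((Finset.univ.sup n : ℕ) : ℝ) * (M + 1)) hVo (fun y hy => hy.1)
    (Real.rpow_pos_of_pos ha s) (by linarith) lam ν hν' ?_ hx ?_ ?_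
  · refine main.trans ?_
    simp only [zero_add, Real.rpow_one]
    refine le_mul_of_one_le_right (by positivity) ?_
    exact_mod_cast Nat.one_le_iff_ne_zero.2 (Nat.factorial_ne_zero _)
  · intro i
    have hni : (n i : ℝ) ≤ ((Finset.univ.sup n : ℕ) : ℝ) := by
      exact_mod_cast Finset.le_sup (f := n) (Finset.mem_univ i)
    have hri : (r : ℝ) ≤ n i := by
      exact_mod_cast (Nat.le_self_pow (by omega) r).trans (hn i)
    have h1 : |lam i| ≤ n i * M := by
      simp only [hlam, abs_mul, Nat.abs_cast, abs_of_pos hs0]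
      calc (n i : ℝ) * |μ i| * s ≤ n i * |μ i| := mul_le_of_le_one_right (by positivity) hs1
        _ ≤ n i * M := mul_le_mul_of_nonneg_left (hMi i) (by positivity)
    calc |lam i| + r ≤ n i * (M + 1) := by linarith
      _ ≤ _ := mul_le_mul_of_nonneg_right hni (by linarith)
  · change (fun x => a ^ s * monom lam x) x ≤ K
    rw [← heq hx]
    -- the case `t = 1` of the root estimate
    have h1 := root_le (t := 1) hbpos.le hK1 zero_le_one le_rfl hr hl (le_refl (r ^ l))
      (by simpa using hb0 _ hx.2)
    rwa [one_pow, mul_one] at h1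
  · intro i hi
    have hμi : μ i ≠ 0 := by
      rintro h
      exact hi (by simp [hlam, h])
    change (fun x => a ^ s * monom lam x) x ≤ _
    rw [← heq hx]
    exact root_le hbpos.le hK1 (hx.1 i).1.le (hx.1 i).2.le hr hl (hn i) (hb1 _ hx.2 i hμi)
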